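/- (Exact gauge cancellation identity for the approximate mass metric.) Let M ∈ ℝ and Ω := {x ∈ ℝ³ : |x| > 0 and |x| > 2M}. On Ω, with r = |x|, define the time-independent symmetric 2-tensor h̃ by h̃_{00} := 2M/r, h̃_{0i} := 0, h̃_{ij} := −(4M log(r−2M)/r) δ_{ij} − (x_i x_j/r²)(2M/r − 4M log(r−2M)/r), and the vector G̃ by G̃^0 := 0, G̃^i := −(4M log(r−2M)/r²)(x^i/r). Then for every i ∈ {1,2,3} and every x ∈ Ω: m^{αβ}∂_α h̃_{βi} − ½ m^{αβ}∂_i h̃_{αβ} + m_{iν}G̃^ν = 8M² x^i/(r³(r−2M)), i.e. Σ_j ∂_j h̃_{ji} − ½ ∂_i(−h̃_{00} + Σ_j h̃_{jj}) + G̃^i = 8M² x^i/(r³(r−2M)); and the corresponding μ = 0 component m^{αβ}∂_α h̃_{β0} − ½ m^{αβ}∂_t h̃_{αβ} + m_{0ν}G̃^ν vanishes identically. -/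

import Mathlib

open MeasureTheory

noncomputable def pd (μ : Fin 4) (f : (Fin 4 → ℝ) → ℝ) (x : Fin 4 → ℝ) : ℝ :=
  fderiv ℝ f x (Pi.single μ 1)

noncomputable def pd3 (i : Fin 3) (f : (Fin 3 → ℝ) → ℝ) (x : Fin 3 → ℝ) : ℝ :=
  fderiv ℝ f x (Pi.single i 1)

noncomputable def rad (p : Fin 4 → ℝ) : ℝ := Real.sqrt (∑ i : Fin 3, (p i.succ) ^ 2)

noncomputable def rad3 (y : Fin 3 → ℝ) : ℝ := Real.sqrt (∑ i : Fin 3, (y i) ^ 2)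

noncomputable def spt (t : ℝ) (y : Fin 3 → ℝ) : Fin 4 → ℝ := ![t, y 0, y 1, y 2]

noncomputable def minkVF : Fin 11 → (Fin 4 → ℝ) → Fin 4 → ℝ :=
  ![fun _ => Pi.single 0 1,
    fun _ => Pi.single 1 1,
    fun _ => Pi.single 2 1,
    fun _ => Pi.single 3 1,
    fun p => p 1 • (Pi.single 2 1 : Fin 4 → ℝ) - p 2 • (Pi.single 1 1 : Fin 4 → ℝ),
    fun p => p 1 • (Pi.single 3 1 : Fin 4 → ℝ) - p 3 • (Pi.single 1 1 : Fin 4 → ℝ),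
    fun p => p 2 • (Pi.single 3 1 : Fin 4 → ℝ) - p 3 • (Pi.single 2 1 : Fin 4 → ℝ),
    fun p => p 0 • (Pi.single 1 1 : Fin 4 → ℝ) + p 1 • (Pi.single 0 1 : Fin 4 → ℝ),
    fun p => p 0 • (Pi.single 2 1 : Fin 4 → ℝ) + p 2 • (Pi.single 0 1 : Fin 4 → ℝ),
    fun p => p 0 • (Pi.single 3 1 : Fin 4 → ℝ) + p 3 • (Pi.single 0 1 : Fin 4 → ℝ),
    fun p => p]

noncomputable def GammaList : List (Fin 11) → ((Fin 4 → ℝ) → ℝ) → (Fin 4 → ℝ) → ℝ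
  | [] => fun f p => f p
  | k :: I => fun f p => fderiv ℝ (GammaList I f) p (minkVF k p)

noncomputable def derivNormSq (f : (Fin 4 → ℝ) → ℝ) (p : Fin 4 → ℝ) : ℝ :=
  ∑ μ : Fin 4, (pd μ f p) ^ 2

noncomputable def derivNorm (f : (Fin 4 → ℝ) → ℝ) (p : Fin 4 → ℝ) : ℝ :=
  Real.sqrt (derivNormSq f p)

noncomputable def dS (f : (Fin 4 → ℝ) → ℝ) (p : Fin 4 → ℝ) : ℝ :=
  (1 / 2) * (pd 0 f p + ∑ i : Fin 3, (p i.succ / rad p) * pd i.succ f p)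

noncomputable def dQ (f : (Fin 4 → ℝ) → ℝ) (p : Fin 4 → ℝ) : ℝ :=
  (1 / 2) * ((∑ i : Fin 3, (p i.succ / rad p) * pd i.succ f p) - pd 0 f p)

noncomputable def angSq (f : (Fin 4 → ℝ) → ℝ) (p : Fin 4 → ℝ) : ℝ :=
  (1 / 2) * (∑ i : Fin 3, ∑ j : Fin 3,
    ((p i.succ / rad p) * pd j.succ f p - (p j.succ / rad p) * pd i.succ f p) ^ 2)

noncomputable def goodNormSq (f : (Fin 4 → ℝ) → ℝ) (p : Fin 4 → ℝ) : ℝ :=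
  (dS f p) ^ 2 + angSq f p

noncomputable def goodNorm (f : (Fin 4 → ℝ) → ℝ) (p : Fin 4 → ℝ) : ℝ :=
  Real.sqrt (goodNormSq f p)

noncomputable def gradSq (f : (Fin 4 → ℝ) → ℝ) (p : Fin 4 → ℝ) : ℝ :=
  (pd 0 f p) ^ 2 + ∑ i : Fin 3, (pd i.succ f p) ^ 2

noncomputable def Lup (p : Fin 4 → ℝ) : Fin 4 → ℝ :=
  ![1, p 1 / rad p, p 2 / rad p, p 3 / rad p]

noncomputable def Llow (p : Fin 4 → ℝ) : Fin 4 → ℝ :=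
  ![-1, p 1 / rad p, p 2 / rad p, p 3 / rad p]

noncomputable def Lbup (p : Fin 4 → ℝ) : Fin 4 → ℝ :=
  ![1, -(p 1 / rad p), -(p 2 / rad p), -(p 3 / rad p)]

noncomputable def Evec : Fin 3 → (Fin 4 → ℝ) → Fin 4 → ℝ :=
  ![fun p => (p 2 / rad p) • (Pi.single 3 1 : Fin 4 → ℝ) - (p 3 / rad p) • (Pi.single 2 1 : Fin 4 → ℝ),
    fun p => (p 1 / rad p) • (Pi.single 3 1 : Fin 4 → ℝ) - (p 3 / rad p) • (Pi.single 1 1 : Fin 4 → ℝ),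
    fun p => (p 1 / rad p) • (Pi.single 2 1 : Fin 4 → ℝ) - (p 2 / rad p) • (Pi.single 1 1 : Fin 4 → ℝ)]

noncomputable def frameVF : Fin 5 → (Fin 4 → ℝ) → Fin 4 → ℝ :=
  ![Lup, Lbup, Evec 0, Evec 1, Evec 2]

noncomputable def mInv : Fin 4 → Fin 4 → ℝ :=
  fun α β => if α = β then (if α = 0 then -1 else 1) else 0

noncomputable def wgt (γ q : ℝ) : ℝ :=
  if 0 ≤ q then 1 + (1 + |q|) ^ (1 + 2 * γ) else 1 + (1 + |q|) ^ (-(γ / 2))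

noncomputable def wgt' (γ q : ℝ) : ℝ :=
  if 0 ≤ q then (1 + 2 * γ) * (1 + |q|) ^ (2 * γ) else (γ / 2) * (1 + |q|) ^ (-(γ / 2) - 1)

noncomputable def matNorm (H : (Fin 4 → ℝ) → Fin 4 → Fin 4 → ℝ) (p : Fin 4 → ℝ) : ℝ :=
  Real.sqrt (∑ α : Fin 4, ∑ β : Fin 4, (H p α β) ^ 2)

noncomputable def matLL (H : (Fin 4 → ℝ) → Fin 4 → Fin 4 → ℝ) (p : Fin 4 → ℝ) : ℝ :=
  |∑ α : Fin 4, ∑ β : Fin 4, H p α β * Llow p α * Llow p β|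

noncomputable def dmatNorm (H : (Fin 4 → ℝ) → Fin 4 → Fin 4 → ℝ) (p : Fin 4 → ℝ) : ℝ :=
  Real.sqrt (∑ c : Fin 4, ∑ α : Fin 4, ∑ β : Fin 4, (pd c (fun y => H y α β) p) ^ 2)

noncomputable def dmatLL (H : (Fin 4 → ℝ) → Fin 4 → Fin 4 → ℝ) (p : Fin 4 → ℝ) : ℝ :=
  Real.sqrt (∑ u : Fin 5,
    (∑ α : Fin 4, ∑ β : Fin 4,
      fderiv ℝ (fun y => H y α β) p (frameVF u p) * Llow p α * Llow p β) ^ 2)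

noncomputable def gdmatNorm (H : (Fin 4 → ℝ) → Fin 4 → Fin 4 → ℝ) (p : Fin 4 → ℝ) : ℝ :=
  Real.sqrt (∑ α : Fin 4, ∑ β : Fin 4, goodNormSq (fun y => H y α β) p)

/-- The spatial part `h̃_{ij}` of the approximate mass metric. -/
noncomputable def htil (M : ℝ) (i j : Fin 3) (y : Fin 3 → ℝ) : ℝ :=
  -(4 * M * Real.log (rad3 y - 2 * M) / rad3 y) * (if i = j then 1 else 0)
    - (y i * y j / (rad3 y) ^ 2)
        * (2 * M / rad3 y - 4 * M * Real.log (rad3 y - 2 * M) / rad3 y)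

/-- The gauge source vector `G̃^i`. -/
noncomputable def Gtil (M : ℝ) (i : Fin 3) (y : Fin 3 → ℝ) : ℝ :=
  -(4 * M * Real.log (rad3 y - 2 * M) / (rad3 y) ^ 2) * (y i / rad3 y)

/-- The full (time-independent) symmetric 2-tensor `h̃_{μν}`:
`h̃_{00} = 2M/r`, `h̃_{0i} = 0`, and spatial part `htil`. -/
noncomputable def htil4 (M : ℝ) (y : Fin 3 → ℝ) : Fin 4 → Fin 4 → ℝ :=
  Fin.cons (Fin.cons (2 * M / rad3 y) (fun _ : Fin 3 => 0))
    (fun i : Fin 3 => Fin.cons 0 (fun j : Fin 3 => htil M i j y))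

/-- The gauge source vector `G̃^μ`, with `G̃^0 = 0`. -/
noncomputable def Gtil4 (M : ℝ) (y : Fin 3 → ℝ) : Fin 4 → ℝ :=
  Fin.cons 0 (fun i : Fin 3 => Gtil M i y)

theorem rad3_sq (y : Fin 3 → ℝ) : rad3 y ^ 2 = y 0 ^ 2 + y 1 ^ 2 + y 2 ^ 2 := by
  unfold rad3
  rw [Real.sq_sqrt (by positivity), Fin.sum_univ_three]

theorem rad3_hasFDerivAt (x : Fin 3 → ℝ) (h0 : 0 < rad3 x) :
    ∃ D : (Fin 3 → ℝ) →L[ℝ] ℝ, HasFDerivAt rad3 D x ∧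
      ∀ k, D (Pi.single k 1) = x k / rad3 x := by
  have hp : ∀ k : Fin 3, HasFDerivAt (fun y : Fin 3 → ℝ => y k)
      (ContinuousLinearMap.proj (R := ℝ) (φ := fun _ : Fin 3 => ℝ) k) x :=
    fun k => (ContinuousLinearMap.proj (R := ℝ) (φ := fun _ : Fin 3 => ℝ) k).hasFDerivAt
  have hs : (∑ i : Fin 3, (x i) ^ 2) ≠ 0 := by
    intro h
    unfold rad3 at h0
    rw [h] at h0
    simp at h0
  have h1 := (HasFDerivAt.fun_sum (u := Finset.univ) (fun k _ => (hp k).pow 2)).sqrt hs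
  refine ⟨_, h1, fun k => ?_⟩
  have hr : Real.sqrt (∑ i : Fin 3, (x i) ^ 2) ≠ 0 := h0.ne'
  unfold rad3
  fin_cases k <;> simp [Fin.sum_univ_three, Pi.single_apply] <;> simp [Fin.sum_univ_three] at hr <;> field_simp

theorem pd3_key (x : Fin 3 → ℝ) (h0 : 0 < rad3 x) (φ ψ : ℝ → ℝ) (φ' ψ' c : ℝ)
    (hφ : HasDerivAt φ φ' (rad3 x)) (hψ : HasDerivAt ψ ψ' (rad3 x)) (i j k : Fin 3) :
    pd3 k (fun y => φ (rad3 y) * c + y i * y j * ψ (rad3 y)) x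
      = φ' * (x k / rad3 x) * c
        + ((if i = k then 1 else 0) * x j + x i * (if j = k then 1 else 0)) * ψ (rad3 x)
        + x i * x j * (ψ' * (x k / rad3 x)) := by
  obtain ⟨D, hD, hk⟩ := rad3_hasFDerivAt x h0
  have hp : ∀ k : Fin 3, HasFDerivAt (fun y : Fin 3 → ℝ => y k)
      (ContinuousLinearMap.proj (R := ℝ) (φ := fun _ : Fin 3 => ℝ) k) x :=
    fun k => (ContinuousLinearMap.proj (R := ℝ) (φ := fun _ : Fin 3 => ℝ) k).hasFDerivAt
  have h1 := ((hφ.comp_hasFDerivAt x hD).mul_const c).add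
    (((hp i).mul (hp j)).mul (hψ.comp_hasFDerivAt x hD))
  unfold pd3
  have h2 : HasFDerivAt (fun y => φ (rad3 y) * c + y i * y j * ψ (rad3 y)) _ x := h1
  rw [h2.fderiv]
  simp [hk, Pi.single_apply]
  split_ifs <;> ring

/-- Exact gauge cancellation identity for the approximate mass metric:
on `{|x| > 0} ∩ {|x| > 2M}` (using that `h̃, G̃` are time independent),
`m^{αβ}∂_α h̃_{βi} − ½ m^{αβ}∂_i h̃_{αβ} + m_{iν}G̃^ν = 8M² x^i/(r³(r−2M))`, i.e.
`Σ_j ∂_j h̃_{ji} − ½ ∂_i(−h̃_{00} + Σ_j h̃_{jj}) + G̃^i = 8M² x^i/(r³(r−2M))`,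
while the `μ = 0` component `Σ_j ∂_j h̃_{j0} − G̃^0` vanishes identically. -/
theorem stmt16 (M : ℝ) (x : Fin 3 → ℝ) (h0 : 0 < rad3 x) (hM : 2 * M < rad3 x) :
    (∀ i : Fin 3,
      (∑ j : Fin 3, pd3 j (fun y => htil4 M y j.succ i.succ) x)
          - (1 / 2) * pd3 i
              (fun y => -(htil4 M y 0 0) + (∑ j : Fin 3, htil4 M y j.succ j.succ)) x
          + Gtil4 M x i.succ
        = 8 * M ^ 2 * x i / ((rad3 x) ^ 3 * (rad3 x - 2 * M)))
    ∧ ((∑ j : Fin 3, pd3 j (fun y => htil4 M y j.succ 0) x) - Gtil4 M x 0 = 0) := by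
  have hr : rad3 x ≠ 0 := h0.ne'
  have hrM : rad3 x - 2 * M ≠ 0 := (sub_pos.2 hM).ne'
  have hL : HasDerivAt (fun r : ℝ => Real.log (r - 2 * M)) (1 / (rad3 x - 2 * M)) (rad3 x) :=
    ((hasDerivAt_id _).sub_const _).log hrM
  have hid := hasDerivAt_id (rad3 x)
  have hA : HasDerivAt (fun r : ℝ => -(4 * M * Real.log (r - 2 * M) / r))
      (-(4 * M * (1 / (rad3 x * (rad3 x - 2 * M)) - Real.log (rad3 x - 2 * M) / rad3 x ^ 2)))
      (rad3 x) := by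
    refine HasDerivAt.congr_deriv (((hL.const_mul (4 * M)).div hid hr).neg) ?_
    simp only [id]
    clear hL hid
    generalize hS : rad3 x - 2 * M = S at *
    field_simp
  have hB : HasDerivAt
      (fun r : ℝ => -((2 * M - 4 * M * Real.log (r - 2 * M)) / r ^ 3))
      (4 * M / (rad3 x ^ 3 * (rad3 x - 2 * M))
        + 3 * (2 * M - 4 * M * Real.log (rad3 x - 2 * M)) / rad3 x ^ 4)
      (rad3 x) := by
    refine HasDerivAt.congr_deriv ((((hL.const_mul (4 * M)).const_sub (2 * M)).div (hid.pow 3) (pow_ne_zero 3 hr)).neg) ?_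
    simp
    clear hL hid hA
    generalize hS : rad3 x - 2 * M = S at *
    field_simp
    ring
  have hC : HasDerivAt
      (fun r : ℝ => -(4 * M / r) - 8 * M * Real.log (r - 2 * M) / r)
      (4 * M / rad3 x ^ 2
        - (8 * M * (1 / (rad3 x * (rad3 x - 2 * M)) - Real.log (rad3 x - 2 * M) / rad3 x ^ 2)))
      (rad3 x) := by
    refine HasDerivAt.congr_deriv ((((hasDerivAt_const (rad3 x) (4 * M)).div hid hr).neg).sub
      ((hL.const_mul (8 * M)).div hid hr)) ?_
    simp only [id]
    clear hL hid hA hB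
    generalize hS : rad3 x - 2 * M = S at *
    field_simp
    ring
  have e1 : ∀ i j : Fin 3, (fun y => htil4 M y j.succ i.succ) = fun y =>
      (fun r : ℝ => -(4 * M * Real.log (r - 2 * M) / r)) (rad3 y) * (if j = i then 1 else 0)
      + y j * y i * (fun r : ℝ => -((2 * M - 4 * M * Real.log (r - 2 * M)) / r ^ 3)) (rad3 y) := by
    intro i j
    funext y
    simp only [htil4, Fin.cons_succ, htil]
    by_cases h : rad3 y = 0
    · simp [h]
    · field_simp
      ring
  have e2 : (fun y => -(htil4 M y 0 0) + (∑ j : Fin 3, htil4 M y j.succ j.succ)) = fun y =>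
      (fun r : ℝ => -(4 * M / r) - 8 * M * Real.log (r - 2 * M) / r) (rad3 y) * 1
      + y 0 * y 0 * (fun _ : ℝ => (0 : ℝ)) (rad3 y) := by
    funext y
    have hy := rad3_sq y
    simp only [htil4, Fin.cons_succ, Fin.cons_zero, htil, Fin.sum_univ_three]
    by_cases h : rad3 y = 0
    · simp [h]
    · have hz : y 0 ^ 2 = rad3 y ^ 2 - y 1 ^ 2 - y 2 ^ 2 := by linarith
      simp only [if_true, ← pow_two, hz]
      field_simp
      ring
  refine ⟨fun i => ?_, ?_⟩
  · have hx := rad3_sq x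
    rw [e2, pd3_key x h0 _ _ _ _ _ hC (hasDerivAt_const _ _)]
    simp only [e1, pd3_key x h0 _ _ _ _ _ hA hB, Gtil4, Gtil, Fin.cons_succ, Fin.sum_univ_three]
    have hz : x 0 ^ 2 = rad3 x ^ 2 - x 1 ^ 2 - x 2 ^ 2 := by linarith
    generalize Real.log (rad3 x - 2 * M) = L
    generalize hR : rad3 x = R at *
    have key : ∀ b' : ℝ, x 0 * (b' * (x 0 / R)) + x 1 * (b' * (x 1 / R)) + x 2 * (b' * (x 2 / R))
        = b' * R := by
      intro b'
      field_simp
      linear_combination -b' * hx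
    have k1 := key (4 * M / (R ^ 3 * (R - 2 * M)) + 3 * (2 * M - 4 * M * L) / R ^ 4)
    have fin : ∀ X : ℝ, -(4 * M * (1 / (R * (R - 2 * M)) - L / R ^ 2)) * (X / R)
        + 4 * X * -((2 * M - 4 * M * L) / R ^ 3)
        + X * ((4 * M / (R ^ 3 * (R - 2 * M)) + 3 * (2 * M - 4 * M * L) / R ^ 4) * R)
        - 1 / 2 * ((4 * M / R ^ 2 - 8 * M * (1 / (R * (R - 2 * M)) - L / R ^ 2)) * (X / R))
        + -(4 * M * L / R ^ 2) * (X / R) = 8 * M ^ 2 * X / (R ^ 3 * (R - 2 * M)) := by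
      intro X
      clear k1 hA hB hC hL e1 e2
      generalize hS : R - 2 * M = S at *
      have hM2 : M = (R - S) / 2 := by linarith
      subst hM2
      field_simp
      ring
    fin_cases i <;> simp
    · linear_combination fin (x 0) + x 0 * k1
    · linear_combination fin (x 1) + x 1 * k1
    · linear_combination fin (x 2) + x 2 * k1
  · simp [htil4, Gtil4, pd3]
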